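/- arXiv:2512.02547 — 2 statements merged into one kernel-verified Lean document; each statement's English description precedes it below -/
import Mathlib

section
/- Let D, R, P, N ∈ ℕ be positive, let y ∈ ℝ^N, λ ∈ ℝ^P, α > 0, and fix d ∈ {1,…,D}. For samples x_1, …, x_N, features ψ_{θ_p}^(j)(x_{n,j}) ∈ ℂ^{I_j}, and CPD cores W^(j) ∈ ℂ^{I_j × R} (j ≠ d fixed), define Φ_p ∈ ℂ^{N × I_1⋯I_D} with n-th row φ_{θ_p}(x_n)ᵀ, the matrix A_d ∈ ℂ^{N × I_d R} whose n-th row is the vector a_d from the core-linearity identity evaluated at x_n, and H_d = ⊛_{j≠d} W^(j)ᴴ W^(j). Then, as a function of v = vec(W^(d)), the Feature Learning objective satisfies exactly (1/2)‖y − Σ_{p=1}^P λ_p Φ_p w‖_2^2 + (α/2)‖w‖_2^2 = (1/2)‖y − A_d v‖_2^2 + (α/2) vᴴ (H_d ⊗ I_{I_d}) v, where w = Σ_{r=1}^R w_r^(D) ⊗ ⋯ ⊗ w_r^(1) is the rank-R CPD vector built from all cores. -/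
open Finset Matrix Kronecker

/-- The bilinear pairing of a rank-one tensor with a CPD tensor, with the `d`-th mode singled out. -/
theorem sum_prod_mul_cpd {ι ρ K : Type*} [Fintype ι] [DecidableEq ι] [Fintype ρ] [CommSemiring K]
    {κ : ι → Type*} [∀ j, Fintype (κ j)] (d : ι) (a : (j : ι) → κ j → K)
    (W : (j : ι) → Matrix (κ j) ρ K) :
    ∑ i : (j : ι) → κ j, (∏ j, a j (i j)) * ∑ r, ∏ j, W j (i j) r =
      ∑ r, (∏ j ∈ Finset.univ.erase d, ∑ k, a j k * W j k r) * ∑ k, a d k * W d k r := by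
  simp_rw [Finset.mul_sum (s := (Finset.univ : Finset ρ)), ← Finset.prod_mul_distrib]
  rw [Finset.sum_comm]
  refine Finset.sum_congr rfl fun r _ => ?_
  rw [Finset.prod_erase_mul _ _ (Finset.mem_univ d)]
  exact (Fintype.prod_sum fun j k => a j k * W j k r).symm

/-- With `λ` and all CPD cores except the `d`-th fixed, the Feature Learning
objective `(1/2)‖y − Σ_p λ_p Φ_p w‖² + (α/2)‖w‖²` reduces exactly to the
regularized linear least squares objective
`(1/2)‖y − A_d v‖² + (α/2) vᴴ (H_d ⊗ I) v` in `v = vec(W⁽ᵈ⁾)`. -/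
theorem fl_objective_core_reduction
    (D R P N : ℕ) (hD : 0 < D) (hR : 0 < R) (hP : 0 < P) (hN : 0 < N)
    (I : Fin D → ℕ)
    (y : Fin N → ℝ) (lam : Fin P → ℝ) (α : ℝ) (hα : 0 < α)
    (d : Fin D)
    (ψ : Fin P → Fin N → (j : Fin D) → Fin (I j) → ℂ)
    (W : (j : Fin D) → Matrix (Fin (I j)) (Fin R) ℂ)
    (Φ : Fin P → Matrix (Fin N) ((j : Fin D) → Fin (I j)) ℂ)
    (hΦ : ∀ p n i, Φ p n i = ∏ j, ψ p n j (i j))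
    (w : ((j : Fin D) → Fin (I j)) → ℂ)
    (hw : ∀ i, w i = ∑ r, ∏ j, W j (i j) r)
    (A : Matrix (Fin N) (Fin R × Fin (I d)) ℂ)
    (hA : ∀ n r i, A n (r, i) =
      ∑ p, (lam p : ℂ) *
        (∏ j ∈ Finset.univ.erase d, ∑ i' : Fin (I j), ψ p n j i' * W j i' r) *
        ψ p n d i)
    (H : Matrix (Fin R) (Fin R) ℂ)
    (hH : ∀ r s, H r s =
      ∏ j ∈ Finset.univ.erase d,
        ∑ i : Fin (I j), (starRingEnd ℂ) (W j i r) * W j i s)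
    (v : Fin R × Fin (I d) → ℂ)
    (hv : ∀ r i, v (r, i) = W d i r) :
    (1 / 2 : ℂ) * (∑ n,
        (starRingEnd ℂ) ((y n : ℂ) - ∑ p, (lam p : ℂ) * ((Φ p *ᵥ w) n)) *
          ((y n : ℂ) - ∑ p, (lam p : ℂ) * ((Φ p *ᵥ w) n)))
      + ((α : ℂ) / 2) * (∑ i, (starRingEnd ℂ) (w i) * w i)
    = (1 / 2 : ℂ) * (∑ n,
        (starRingEnd ℂ) ((y n : ℂ) - (A *ᵥ v) n) * ((y n : ℂ) - (A *ᵥ v) n))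
      + ((α : ℂ) / 2) *
          (star v ⬝ᵥ ((H ⊗ₖ (1 : Matrix (Fin (I d)) (Fin (I d)) ℂ)) *ᵥ v)) := by
  have hfit : ∀ n, ∑ p, (lam p : ℂ) * (Φ p *ᵥ w) n = (A *ᵥ v) n := by
    intro n
    simp only [mulVec, dotProduct, hΦ, hw, sum_prod_mul_cpd d, Fintype.sum_prod_type, hA, hv]
    simp only [Finset.mul_sum, Finset.sum_mul]
    rw [Finset.sum_comm]
    refine Finset.sum_congr rfl fun r _ => ?_
    rw [Finset.sum_comm]
    refine Finset.sum_congr rfl fun k _ => Finset.sum_congr rfl fun p _ => ?_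
    ring
  have hreg : ∑ i, (starRingEnd ℂ) (w i) * w i =
      star v ⬝ᵥ ((H ⊗ₖ (1 : Matrix (Fin (I d)) (Fin (I d)) ℂ)) *ᵥ v) := by
    have hleft : ∑ i, (starRingEnd ℂ) (w i) * w i =
        ∑ r, ∑ s, H r s * ∑ k, (starRingEnd ℂ) (W d k r) * W d k s := by
      simp only [hw, map_sum, map_prod, Finset.sum_mul]
      rw [Finset.sum_comm]
      refine Finset.sum_congr rfl fun r _ => ?_
      simp only [hH]
      exact sum_prod_mul_cpd d (fun j k => (starRingEnd ℂ) (W j k r)) W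
    rw [hleft]
    simp only [mulVec, dotProduct, Fintype.sum_prod_type, kroneckerMap_apply, Matrix.one_apply,
      Pi.star_apply, hv, mul_ite, ite_mul, mul_one, mul_zero, zero_mul, Finset.sum_ite_eq,
      Finset.mem_univ, if_true, Finset.mul_sum]
    refine Finset.sum_congr rfl fun r _ => ?_
    rw [Finset.sum_comm]
    refine Finset.sum_congr rfl fun k _ => Finset.sum_congr rfl fun s _ => ?_
    rw [starRingEnd_apply]
    ring
  simp only [hfit, hreg]
end

section
/- Let N, P ∈ ℕ be positive, F ∈ ℝ^{N × P}, y ∈ ℝ^N. Suppose that every minimizer of λ ↦ ‖y − Fλ‖_2 over ℝ^P has Euclidean norm strictly greater than 1 (equivalently, the minimum-norm least squares solution F⁺y satisfies ‖F⁺y‖_2 > 1). Then there exists a unique μ > 0 such that ‖(FᵀF + μI)^{-1}Fᵀy‖_2 = 1, and λ* = (FᵀF + μI)^{-1}Fᵀy is the unique global minimizer of (1/2)‖y − Fλ‖_2^2 over the closed unit ball {λ ∈ ℝ^P : ‖λ‖_2 ≤ 1}; moreover ‖λ*‖_2 = 1. -/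
open Finset Matrix

/-- The shifted Gram matrix `FᵀF + μI` is invertible for `μ > 0`. -/
lemma isUnit_det_gram_add_smul_one {m n : Type*} [Fintype m] [Fintype n] [DecidableEq n]
    (F : Matrix m n ℝ) {μ : ℝ} (hμ : 0 < μ) :
    IsUnit (Fᵀ * F + μ • (1 : Matrix n n ℝ)).det := by
  have h : (Fᵀ * F + μ • (1 : Matrix n n ℝ)).PosDef := by
    have h1 : (Fᵀ * F).PosSemidef := by
      simpa using posSemidef_conjTranspose_mul_self F
    exact PosDef.posSemidef_add h1 (PosDef.one.smul hμ)
  exact (isUnit_iff_isUnit_det _).1 h.isUnit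

/-- Expansion of the squared distance of two vectors into dot products. -/
lemma sum_sub_sq_eq_dotProduct {n : Type*} [Fintype n] (a b : n → ℝ) :
    ∑ i, (a i - b i) ^ 2 = a ⬝ᵥ a - 2 * (a ⬝ᵥ b) + b ⬝ᵥ b := by
  simp only [dotProduct, mul_sum, ← sum_sub_distrib, ← sum_add_distrib]
  exact sum_congr rfl fun _ _ => by ring

/-- Completing the square in the ridge regression objective around a solution `s` of its
normal equation. -/
lemma ridge_objective_eq {m n : Type*} [Fintype m] [Fintype n]
    (F : Matrix m n ℝ) (y : m → ℝ) (μ : ℝ) {s : n → ℝ}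
    (hs : Fᵀ *ᵥ (F *ᵥ s) + μ • s = Fᵀ *ᵥ y) (u : n → ℝ) :
    ∑ i, (y i - (F *ᵥ u) i) ^ 2 + μ * ∑ j, u j ^ 2 =
      ∑ i, (y i - (F *ᵥ s) i) ^ 2 + μ * ∑ j, s j ^ 2 +
        (μ * ∑ j, (u j - s j) ^ 2 + ∑ i, ((F *ᵥ u) i - (F *ᵥ s) i) ^ 2) := by
  have adj : ∀ (v : n → ℝ) (w : m → ℝ), v ⬝ᵥ (Fᵀ *ᵥ w) = (F *ᵥ v) ⬝ᵥ w := fun v w => by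
    rw [dotProduct_mulVec, vecMul_transpose]
  have key : ∀ v, (F *ᵥ v) ⬝ᵥ (F *ᵥ s) + μ * (v ⬝ᵥ s) = (F *ᵥ v) ⬝ᵥ y := fun v => by
    rw [← adj, ← adj, ← hs, dotProduct_add, dotProduct_smul, smul_eq_mul]
  have hu := key u
  have hss := key s
  rw [dotProduct_comm _ y] at hu hss
  have hsq : ∀ a : n → ℝ, ∑ i, a i ^ 2 = a ⬝ᵥ a := fun a => by simp only [dotProduct, pow_two]
  simp only [sum_sub_sq_eq_dotProduct]
  rw [hsq u, hsq s]
  linear_combination 2 * hu - 2 * hss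

/-- The squared norm of the ridge solution is continuous in the parameter `μ > 0`. -/
lemma continuousOn_sum_sq_ridge {m n : Type*} [Fintype m] [Fintype n] [DecidableEq n]
    (F : Matrix m n ℝ) (b : n → ℝ) :
    ContinuousOn (fun μ : ℝ => ∑ i, (((Fᵀ * F + μ • (1 : Matrix n n ℝ))⁻¹ *ᵥ b) i) ^ 2)
      (Set.Ioi 0) := by
  intro μ hμ
  apply ContinuousAt.continuousWithinAt
  have hc : Continuous fun μ : ℝ => Fᵀ * F + μ • (1 : Matrix n n ℝ) := by fun_prop
  have hinv : ContinuousAt (fun μ : ℝ => (Fᵀ * F + μ • (1 : Matrix n n ℝ))⁻¹) μ := by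
    simp only [Matrix.inv_def, Ring.inverse_eq_inv']
    exact (hc.matrix_det.continuousAt.inv₀
      (isUnit_det_gram_add_smul_one F hμ).ne_zero).smul hc.matrix_adjugate.continuousAt
  have hq : Continuous fun M : Matrix n n ℝ => ∑ i, ((M *ᵥ b) i) ^ 2 := by
    have : Continuous fun M : Matrix n n ℝ => M *ᵥ b := continuous_id.matrix_mulVec continuous_const
    fun_prop
  exact hq.continuousAt.comp hinv

/-- If the vectors `s μ` stay in the unit ball and solve the normal equations of ridge regression
for all `μ > 0`, then some least squares solution lies in the unit ball. -/
lemma exists_leastSquares_sum_sq_le_one {m n : Type*} [Fintype m] [Fintype n]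
    (F : Matrix m n ℝ) (y : m → ℝ) (s : ℝ → n → ℝ)
    (hs : ∀ μ, 0 < μ → Fᵀ *ᵥ (F *ᵥ s μ) + μ • s μ = Fᵀ *ᵥ y)
    (hb : ∀ μ, 0 < μ → ∑ j, s μ j ^ 2 ≤ 1) :
    ∃ l : n → ℝ, (∀ u, ∑ i, (y i - (F *ᵥ l) i) ^ 2 ≤ ∑ i, (y i - (F *ᵥ u) i) ^ 2) ∧
      ∑ j, l j ^ 2 ≤ 1 := by
  have hK : IsCompact {x : n → ℝ | ∑ j, x j ^ 2 ≤ 1} := by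
    refine (isCompact_closedBall (0 : n → ℝ) 1).of_isClosed_subset
      (isClosed_le (by fun_prop) continuous_const) fun x hx => ?_
    rw [mem_closedBall_zero_iff, pi_norm_le_iff_of_nonneg zero_le_one]
    intro j
    rw [Real.norm_eq_abs, ← sq_le_one_iff_abs_le_one]
    exact (single_le_sum (f := fun j => x j ^ 2) (fun j _ => sq_nonneg _) (mem_univ j)).trans hx
  have hpos : ∀ k : ℕ, (0 : ℝ) < 1 / ((k : ℝ) + 1) := fun k => by positivity
  obtain ⟨l, hl, φ, hφ, hlim⟩ :=
    hK.tendsto_subseq (x := fun k : ℕ => s (1 / ((k : ℝ) + 1))) fun k => hb _ (hpos k)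
  refine ⟨l, fun u => ?_, hl⟩
  have hF : Continuous fun x : n → ℝ => ∑ i, (y i - (F *ᵥ x) i) ^ 2 := by
    have : Continuous fun x : n → ℝ => F *ᵥ x := continuous_const.matrix_mulVec continuous_id
    fun_prop
  have hμ := (tendsto_one_div_add_atTop_nhds_zero_nat (𝕜 := ℝ)).comp hφ.tendsto_atTop
  have hr := (hμ.mul_const (∑ j, u j ^ 2)).const_add (∑ i, (y i - (F *ᵥ u) i) ^ 2)
  rw [zero_mul, add_zero] at hr
  refine le_of_tendsto_of_tendsto' ((hF.tendsto l).comp hlim) hr fun k => ?_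
  have hk := hpos (φ k)
  have h := ridge_objective_eq F y _ (hs _ hk) u
  simp only [Function.comp_apply]
  rw [h]
  have : 0 ≤ ∑ i, ((F *ᵥ u) i - (F *ᵥ s (1 / ((φ k : ℝ) + 1))) i) ^ 2 := by positivity
  have h1 : 0 ≤ 1 / ((φ k : ℝ) + 1) * ∑ j, s (1 / ((φ k : ℝ) + 1)) j ^ 2 := by positivity
  have h2 : 0 ≤ 1 / ((φ k : ℝ) + 1) * ∑ j, (u j - s (1 / ((φ k : ℝ) + 1)) j) ^ 2 := by positivity
  linarith

/-- Fixed-norm regularized least squares: if every least squares minimizer of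
`λ ↦ ‖y − Fλ‖₂` has Euclidean norm strictly greater than 1, then there is a unique
`μ > 0` with `‖(FᵀF + μI)⁻¹Fᵀy‖₂ = 1`, and for such `μ` the vector
`λ* = (FᵀF + μI)⁻¹Fᵀy` is the unique global minimizer of `(1/2)‖y − Fλ‖₂²` over
the closed unit ball, with `‖λ*‖₂ = 1`. -/
theorem fixed_norm_regularization
    (N P : ℕ) (hN : 0 < N) (hP : 0 < P)
    (F : Matrix (Fin N) (Fin P) ℝ) (y : Fin N → ℝ)
    (sol : ℝ → Fin P → ℝ)
    (hsol : ∀ μ, sol μ =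
      (Fᵀ * F + μ • (1 : Matrix (Fin P) (Fin P) ℝ))⁻¹ *ᵥ (Fᵀ *ᵥ y))
    (hmin : ∀ lam : Fin P → ℝ,
      (∀ u, ∑ n, (y n - (F *ᵥ lam) n) ^ 2 ≤ ∑ n, (y n - (F *ᵥ u) n) ^ 2) →
      1 < ∑ i, lam i ^ 2) :
    (∃! μ : ℝ, 0 < μ ∧ ∑ i, sol μ i ^ 2 = 1) ∧
    ∀ μ : ℝ, 0 < μ → (∑ i, sol μ i ^ 2 = 1) →
      ∀ u : Fin P → ℝ, (∑ i, u i ^ 2) ≤ 1 → u ≠ sol μ →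
        ∑ n, (y n - (F *ᵥ sol μ) n) ^ 2 < ∑ n, (y n - (F *ᵥ u) n) ^ 2 := by
  have hnormal : ∀ μ, 0 < μ → Fᵀ *ᵥ (F *ᵥ sol μ) + μ • sol μ = Fᵀ *ᵥ y := fun μ hμ => by
    have h : (Fᵀ * F + μ • (1 : Matrix (Fin P) (Fin P) ℝ)) *ᵥ sol μ = Fᵀ *ᵥ y := by
      rw [hsol, mulVec_mulVec, mul_nonsing_inv _ (isUnit_det_gram_add_smul_one F hμ), one_mulVec]
    rwa [add_mulVec, smul_mulVec, one_mulVec, ← mulVec_mulVec] at h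
  have hopt : ∀ μ : ℝ, 0 < μ → (∑ i, sol μ i ^ 2 = 1) →
      ∀ u : Fin P → ℝ, (∑ i, u i ^ 2) ≤ 1 → u ≠ sol μ →
        ∑ n, (y n - (F *ᵥ sol μ) n) ^ 2 < ∑ n, (y n - (F *ᵥ u) n) ^ 2 := by
    intro μ hμ h1 u hu hne
    have h := ridge_objective_eq F y μ (hnormal μ hμ) u
    obtain ⟨j, hj⟩ := Function.ne_iff.1 hne
    have hd : 0 < ∑ j, (u j - sol μ j) ^ 2 :=
      sum_pos' (fun _ _ => sq_nonneg _) ⟨j, mem_univ j, by have := sub_ne_zero.2 hj; positivity⟩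
    have hFd : 0 ≤ ∑ n, ((F *ᵥ u) n - (F *ᵥ sol μ) n) ^ 2 := by positivity
    rw [h1] at h
    nlinarith [mul_pos hμ hd, mul_le_mul_of_nonneg_left hu hμ.le]
  refine ⟨?_, hopt⟩
  obtain ⟨a, ha, hsa⟩ : ∃ a, 0 < a ∧ 1 < ∑ i, sol a i ^ 2 := by
    by_contra! hle
    obtain ⟨l, hl, hl1⟩ := exists_leastSquares_sum_sq_le_one F y sol hnormal hle
    exact (hmin l hl).not_ge hl1
  obtain ⟨b, hb, hsb⟩ : ∃ b, 0 < b ∧ ∑ i, sol b i ^ 2 ≤ 1 := by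
    have hpos : 0 < ∑ n, y n ^ 2 + 1 := by positivity
    refine ⟨_, hpos, ?_⟩
    have h := ridge_objective_eq F y _ (hnormal _ hpos) 0
    simp only [mulVec_zero, Pi.zero_apply, sub_zero, zero_sub, even_two, Even.neg_pow] at h
    set s := sol (∑ n, y n ^ 2 + 1)
    have h1 : 0 ≤ ∑ n, (y n - (F *ᵥ s) n) ^ 2 := by positivity
    have h2 : 0 ≤ ∑ n, ((F *ᵥ s) n) ^ 2 := by positivity
    have h3 : 0 ≤ (∑ n, y n ^ 2 + 1) * ∑ j, s j ^ 2 := by positivity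
    simp only [ne_eq, OfNat.ofNat_ne_zero, not_false_eq_true, zero_pow, sum_const_zero, mul_zero,
      add_zero] at h
    refine le_of_mul_le_mul_left ?_ hpos
    linarith
  have hcont : ContinuousOn (fun μ => ∑ i, sol μ i ^ 2) (Set.Ioi 0) := by
    simpa only [hsol] using continuousOn_sum_sq_ridge F (Fᵀ *ᵥ y)
  obtain ⟨μ, hμ, h1⟩ := isPreconnected_Ioi.intermediate_value (Set.mem_Ioi.2 hb)
    (Set.mem_Ioi.2 ha) hcont ⟨hsb, hsa.le⟩
  refine ⟨μ, ⟨hμ, h1⟩, fun ν ⟨hν, hν1⟩ => ?_⟩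
  have heq : sol ν = sol μ := by
    by_contra hne
    exact (hopt μ hμ h1 _ hν1.le hne).not_gt (hopt ν hν hν1 _ h1.le (Ne.symm hne))
  have hsmul : ν • sol μ = μ • sol μ := by
    have h := (hnormal ν hν).trans (hnormal μ hμ).symm
    rw [heq] at h
    exact add_left_cancel h
  refine smul_left_injective ℝ (fun h0 => ?_) hsmul
  simp [h0] at h1
end
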